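/- Let ℓ be a prime, k an algebraic closure of the field with ℓ elements, G a finite group, and b a block of kG. Suppose there exists a group automorphism φ of G such that the induced k-algebra automorphism φ : kG → kG (given by Σ_g α_g g ↦ Σ_g α_g φ(g)) satisfies φ(b) = σ(b). Then kGb is isomorphic as a k-algebra to its first Frobenius twist; in particular mf(kGb) = 1. -/

import Mathlib

/-- A central idempotent of a ring. -/
def IsCentralIdem {R : Type*} [Ring R] (b : R) : Prop :=
  (∀ x, b * x = x * b) ∧ b * b = b

/-- A block of a ring: a primitive idempotent of the center, i.e. a nonzero central
idempotent that is not a sum of two nonzero orthogonal central idempotents. -/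
def IsBlock {R : Type*} [Ring R] (b : R) : Prop :=
  IsCentralIdem b ∧ b ≠ 0 ∧
    ∀ c d : R, IsCentralIdem c → IsCentralIdem d → c * d = 0 → b = c + d →
      c = 0 ∨ d = 0

/-- Galois conjugation `σ : kG → kG`, raising each coefficient to the `ℓ`-th power. -/
noncomputable def galois (ℓ : ℕ) (k : Type*) [Field k] [Fact ℓ.Prime] [CharP k ℓ]
    {G : Type*} [Group G] (x : MonoidAlgebra k G) : MonoidAlgebra k G :=
  MonoidAlgebra.ofCoeff (Finsupp.mapRange (frobenius k ℓ) (map_zero _) x.coeff)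

/-- The corner ideal `kG·b` of a central idempotent `b`, as a set. -/
def cornerSet {R : Type*} [Ring R] (b : R) : Set R := {x | x * b = x}

/-!
Galois conjugation `σ` and the automorphism of `kG` induced by `φ` are ring automorphisms with the
same value at `b`, so `φ⁻¹ ∘ σ` fixes `b` and restricts to `kG·b`. It is Frobenius-semilinear
because `σ` is, while `φ⁻¹` is `k`-linear.
-/

theorem bijOn_cornerSet {R S : Type*} [Ring R] [Ring S] (e : R ≃+* S) (b : R) :
    Set.BijOn e (cornerSet b) (cornerSet (e b)) :=
  e.toEquiv.bijOn fun x ↦ show e x * e b = e x ↔ x * b = x by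
    rw [← map_mul, e.injective.eq_iff]

section Galois

variable (ℓ : ℕ) [Fact ℓ.Prime] (k : Type*) [Field k] [CharP k ℓ] {G : Type*} [Group G]

theorem galois_smul (c : k) (x : MonoidAlgebra k G) :
    galois ℓ k (c • x) = c ^ ℓ • galois ℓ k x := by
  ext g
  simp [galois, frobenius_def, mul_pow]

variable [PerfectRing k ℓ]

variable (G) in
/-- Galois conjugation `σ` as a ring automorphism of `kG`, for `k` perfect. -/
noncomputable def galoisEquiv : MonoidAlgebra k G ≃+* MonoidAlgebra k G :=
  MonoidAlgebra.mapRingEquiv G (frobeniusEquiv k ℓ)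

/-- The ring automorphism `φ⁻¹ ∘ σ` of `kG`, where `φ` acts `k`-linearly through its action on `G`;
if it fixes `b`, its restriction identifies `kG·b` with its first Frobenius twist. -/
noncomputable def twistedGaloisEquiv (φ : G ≃* G) : MonoidAlgebra k G ≃+* MonoidAlgebra k G :=
  (galoisEquiv ℓ k G).trans (MonoidAlgebra.domCongr k k φ).symm.toRingEquiv

theorem twistedGaloisEquiv_apply (φ : G ≃* G) (x : MonoidAlgebra k G) :
    twistedGaloisEquiv ℓ k φ x = (MonoidAlgebra.domCongr k k φ).symm (galois ℓ k x) := rfl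

theorem twistedGaloisEquiv_smul (φ : G ≃* G) (c : k) (x : MonoidAlgebra k G) :
    twistedGaloisEquiv ℓ k φ (c • x) = c ^ ℓ • twistedGaloisEquiv ℓ k φ x := by
  simp only [twistedGaloisEquiv_apply, galois_smul, map_smul]

theorem twistedGaloisEquiv_eq_self_iff (φ : G ≃* G) (b : MonoidAlgebra k G) :
    twistedGaloisEquiv ℓ k φ b = b ↔ Finsupp.mapDomain φ b.coeff = (galois ℓ k b).coeff := by
  rw [twistedGaloisEquiv_apply, AlgEquiv.symm_apply_eq, eq_comm, ← MonoidAlgebra.coeff_inj]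
  rfl

end Galois

theorem block_group_automorphism_galois_iso_frobenius_twist_general
    (ℓ : ℕ) [Fact ℓ.Prime] (k : Type*) [Field k] [CharP k ℓ] [PerfectRing k ℓ]
    (G : Type*) [Group G] (b : MonoidAlgebra k G)
    (φ : G ≃* G) (hφ : Finsupp.mapDomain φ b.coeff = (galois ℓ k b).coeff) :
    ∃ ψ : MonoidAlgebra k G → MonoidAlgebra k G,
      Set.BijOn ψ (cornerSet b) (cornerSet b) ∧
      (∀ x ∈ cornerSet b, ∀ y ∈ cornerSet b, ψ (x + y) = ψ x + ψ y) ∧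
      (∀ x ∈ cornerSet b, ∀ y ∈ cornerSet b, ψ (x * y) = ψ x * ψ y) ∧
      (∀ (c : k), ∀ x ∈ cornerSet b, ψ (c • x) = c ^ ℓ • ψ x) := by
  let ψ := twistedGaloisEquiv ℓ k φ
  have ψ_b : ψ b = b := (twistedGaloisEquiv_eq_self_iff ℓ k φ b).mpr hφ
  have ψ_bijOn : Set.BijOn ψ (cornerSet b) (cornerSet b) := by
    simpa only [ψ_b] using bijOn_cornerSet ψ b
  exact ⟨ψ, ψ_bijOn, fun x _ y _ ↦ map_add ψ x y, fun x _ y _ ↦ map_mul ψ x y,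
    fun c x _ ↦ twistedGaloisEquiv_smul ℓ k φ c x⟩

/-- If there is a group automorphism `φ` of `G` whose induced `k`-algebra automorphism
of `kG` (given by `Σ α_g g ↦ Σ α_g φ(g)`) sends the block `b` to `σ(b)`, then `kG·b`
is isomorphic as a `k`-algebra to its first Frobenius twist: there is a ring
isomorphism `ψ : kG·b → kG·b` with `ψ (λ • x) = λ^ℓ • ψ x`; in particular
`mf(kGb) = 1`. -/
theorem block_group_automorphism_galois_iso_frobenius_twist
    (ℓ : ℕ) [Fact ℓ.Prime] (k : Type) [Field k] [IsAlgClosed k] [CharP k ℓ]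
    [Algebra (ZMod ℓ) k] [IsAlgClosure (ZMod ℓ) k]
    (G : Type) [Group G] [Fintype G]
    (b : MonoidAlgebra k G) (hb : IsBlock b)
    (φ : G ≃* G) (hφ : Finsupp.mapDomain (⇑φ) b.coeff = (galois ℓ k b).coeff) :
    ∃ ψ : MonoidAlgebra k G → MonoidAlgebra k G,
      Set.BijOn ψ (cornerSet b) (cornerSet b) ∧
      (∀ x ∈ cornerSet b, ∀ y ∈ cornerSet b, ψ (x + y) = ψ x + ψ y) ∧
      (∀ x ∈ cornerSet b, ∀ y ∈ cornerSet b, ψ (x * y) = ψ x * ψ y) ∧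
      (∀ (c : k), ∀ x ∈ cornerSet b, ψ (c • x) = c ^ ℓ • ψ x) :=
  block_group_automorphism_galois_iso_frobenius_twist_general ℓ k G b φ hφ
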